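/- arXiv:2004.14240 — 2 statements merged into one kernel-verified Lean document; each statement's English description precedes it below -/
import Mathlib

section
/- Let S be a symmetric 3×3 real matrix with trace S = 0, let v ∈ ℝ³, and set w = S·v. Define the 3-tensor T by T_{ijk} = 2·(S_{ik}·v_j − S_{jk}·v_i) + (w_j·δ_{ik} − w_i·δ_{jk}), where δ is the Kronecker delta. Then Σ_{i,j,k} (T_{ijk})² = 8·‖S‖²·‖v‖² − 12·‖S·v‖², where ‖S‖² = Σ_{i,j} (S_{ij})² is the squared Frobenius norm and ‖·‖ on vectors is the Euclidean norm. -/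
open Matrix Finset

/-- Squared norm of the covariant 3-tensor
`T_{ijk} = 2(S_{ik} v_j − S_{jk} v_i) + ((Sv)_j δ_{ik} − (Sv)_i δ_{jk})` built from a
symmetric trace-free `S` and a vector `v` in dimension 3:
`|T|² = 8 ‖S‖² ‖v‖² − 12 ‖S v‖²`. -/
theorem norm_sq_fluid_tensor (S : Matrix (Fin 3) (Fin 3) ℝ) (hS : S.IsSymm)
    (htr : S.trace = 0) (v : Fin 3 → ℝ)
    (T : Fin 3 → Fin 3 → Fin 3 → ℝ)
    (hT : ∀ i j k, T i j k =
      2 * (S i k * v j - S j k * v i) +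
        ((S.mulVec v) j * (if i = k then (1 : ℝ) else 0) -
          (S.mulVec v) i * (if j = k then (1 : ℝ) else 0))) :
    ∑ i, ∑ j, ∑ k, (T i j k) ^ 2 =
      8 * (∑ i, ∑ j, (S i j) ^ 2) * (∑ i, (v i) ^ 2) -
        12 * ∑ i, ((S.mulVec v) i) ^ 2 := by
  have h10 : S 1 0 = S 0 1 := hS.apply 0 1
  have h20 : S 2 0 = S 0 2 := hS.apply 0 2
  have h21 : S 2 1 = S 1 2 := hS.apply 1 2
  have h22 : S 2 2 = -S 0 0 - S 1 1 := by
    rw [Matrix.trace_fin_three] at htr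
    linarith
  simp only [hT, Matrix.mulVec, dotProduct, Fin.sum_univ_three, h10, h20, h21, h22]
  simp only [Fin.isValue, Fin.reduceEq, if_true, if_false]
  ring
end

section
/- Let m > 0 and c, d be real constants, and define F(x) = (c·x² + d)·(1 − x²)^{-3} and G(x) = 6·F(x)/(1 − x²) − 2c·(1 − x²)^{-3}. Let f(r) = 1 − m/r for r > m. Then the limit as r → ∞ of 4π·r²·( F(f(r))·f(r)^{-1}·(d/dr)(f′(r)²) + G(f(r))·f′(r)³ ) equals −(c + d)·π/(2m). -/
open Real Filter

/-- Radial flux computation behind equation (3.4): for `f(r) = 1 − m/r` (restricted to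
`r > m`) and the Robinson functions `F`, `G`, the flux expression
`4π r² (F(f) f⁻¹ (|∇f|²)' + G(f) f'³)` tends to `−(c+d)π/(2m)` as `r → ∞`. -/
theorem radial_flux_limit (m c d : ℝ) (hm : 0 < m) (F G : ℝ → ℝ)
    (hF : ∀ x : ℝ, F x = (c * x ^ 2 + d) * ((1 - x ^ 2) ^ 3)⁻¹)
    (hG : ∀ x : ℝ, G x = 6 * F x / (1 - x ^ 2) - 2 * c * ((1 - x ^ 2) ^ 3)⁻¹)
    (f : ℝ → ℝ) (hf : ∀ r : ℝ, m < r → f r = 1 - m / r) :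
    Tendsto (fun r : ℝ =>
        4 * π * r ^ 2 *
          (F (f r) * (f r)⁻¹ * deriv (fun s : ℝ => (deriv f s) ^ 2) r +
            G (f r) * (deriv f r) ^ 3))
      atTop (nhds (-(c + d) * π / (2 * m))) := by
  have h1 : ∀ r : ℝ, m < r → deriv f r = m / r ^ 2 := by
    intro r hr
    have hr0 : r ≠ 0 := by linarith
    have he : f =ᶠ[nhds r] fun s => 1 - m / s := by
      filter_upwards [lt_mem_nhds hr] with s hs using hf s hs
    rw [he.deriv_eq]
    have h : HasDerivAt (fun s : ℝ => 1 - m / s) (0 - (0 * r - m * 1) / r ^ 2) r :=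
      (hasDerivAt_const r (1 : ℝ)).sub ((hasDerivAt_const r m).div (hasDerivAt_id r) hr0)
    rw [h.deriv]
    ring
  have h2 : ∀ r : ℝ, m < r → deriv (fun s : ℝ => (deriv f s) ^ 2) r = -4 * m ^ 2 / r ^ 5 := by
    intro r hr
    have hr0 : r ≠ 0 := by linarith
    have he : (fun s : ℝ => (deriv f s) ^ 2) =ᶠ[nhds r] fun s => m ^ 2 / s ^ 4 := by
      filter_upwards [lt_mem_nhds hr] with s hs
      rw [h1 s hs]
      ring
    rw [he.deriv_eq]
    have h := (hasDerivAt_const r (m ^ 2)).div (hasDerivAt_pow 4 r) (pow_ne_zero 4 hr0)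
    refine h.deriv.trans ?_
    field_simp
    push_cast
    ring
  have hu : Tendsto (fun r : ℝ => m / r) atTop (nhds 0) := tendsto_const_nhds.div_atTop tendsto_id
  let g : ℝ → ℝ := fun u =>
    -16 * π / m * (c * (1 - u) ^ 2 + d) / ((2 - u) ^ 3 * (1 - u)) +
      4 * π / m * (6 * (c * (1 - u) ^ 2 + d) / (2 - u) ^ 4 - 2 * c * u / (2 - u) ^ 3)
  have hg : ContinuousAt g 0 := by
    refine ContinuousAt.add (ContinuousAt.div (by fun_prop) (by fun_prop) (by norm_num))
      (ContinuousAt.mul (by fun_prop) (ContinuousAt.sub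
        (ContinuousAt.div (by fun_prop) (by fun_prop) (by norm_num))
        (ContinuousAt.div (by fun_prop) (by fun_prop) (by norm_num))))
  have hg0 : g 0 = -(c + d) * π / (2 * m) := by
    simp only [g]
    field_simp
    ring
  have hlim := hg.tendsto.comp hu
  rw [hg0] at hlim
  refine hlim.congr' ?_
  filter_upwards [eventually_gt_atTop m] with r hr
  have hr0 : 0 < r := hm.trans hr
  rw [h2 r hr, h1 r hr, hG, hF, hf r hr]
  obtain ⟨u, hu'⟩ : ∃ u, u = m / r := ⟨_, rfl⟩
  have hu0 : 0 < u := hu' ▸ div_pos hm hr0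
  have hu1 : u < 1 := by rw [hu']; exact (div_lt_one hr0).2 hr
  have hrm : r = m / u := by rw [hu']; field_simp
  have e : 1 - (1 - u) ^ 2 = u * (2 - u) := by ring
  have a1 : 2 - u ≠ 0 := by linarith
  have a2 : 1 - u ≠ 0 := by linarith
  simp only [g, Function.comp, ← hu']
  rw [e, hrm]
  field_simp
  ring
end
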